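/- Suppose e ∉ OPT, e ∈ M̃ \ M, and u_e ≥ u_a for every a ∈ M △ M̃. Then u_e ≥ Δ_e/4. -/

import Mathlib

/-!
Since `M̃` has no more elements than `OPT` and contains `e ∉ OPT`, some arm `o ∈ OPT` is missing
from `M̃`, and so `μ̃ o ≤ μ̃ e`. As `e ∉ M`, the value `μ̃ e` exceeds `μ e` by less than `2 * u e`.
If `o ∉ M`, then `μ̃ o` is already an upper bound for `μ o`; if `o ∈ M`, it falls short of `μ o` by
less than `2 * u o`, and `o ∈ M \ M̃` gives `u o ≤ u e`. Either way `μ o - μ e < 4 * u e`.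
-/

theorem exists_mem_notMem_of_card_le {ι : Type*} {s t : Finset ι} {e : ι} (hcard : t.card ≤ s.card)
    (het : e ∈ t) (hes : e ∉ s) : ∃ o ∈ s, o ∉ t :=
  Finset.not_subset.mp fun hst => hes (Finset.eq_of_subset_of_card_le hst hcard ▸ het)

/-- The estimates `μ̃`: the empirical means `μh`, moved to the end of their confidence intervals
(of radius `u`) that speaks most against the candidate set `M`: down on `M` and up off `M`. -/
def adversarialMean {ι R : Type*} [DecidableEq ι] [AddGroup R] (M : Finset ι) (μh u : ι → R)
    (i : ι) : R :=
  if i ∈ M then μh i - u i else μh i + u i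

section AddGroup

variable {ι R : Type*} [DecidableEq ι] [AddGroup R] {M : Finset ι} {μh u : ι → R} {i : ι}

theorem adversarialMean_of_mem (hi : i ∈ M) : adversarialMean M μh u i = μh i - u i :=
  if_pos hi

theorem adversarialMean_of_notMem (hi : i ∉ M) : adversarialMean M μh u i = μh i + u i :=
  if_neg hi

end AddGroup

section OrderedRing

variable {ι R : Type*} [DecidableEq ι] [CommRing R] [LinearOrder R] [IsStrictOrderedRing R]
  {M : Finset ι} {μ μh u : ι → R} {i : ι}

theorem lt_adversarialMean_add_two_mul_of_mem (hi : i ∈ M) (hconf : |μh i - μ i| < u i) :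
    μ i < adversarialMean M μh u i + 2 * u i := by
  rw [adversarialMean_of_mem hi]
  linarith [(abs_lt.mp hconf).1]

theorem lt_adversarialMean_of_notMem (hi : i ∉ M) (hconf : |μh i - μ i| < u i) :
    μ i < adversarialMean M μh u i := by
  rw [adversarialMean_of_notMem hi]
  linarith [(abs_lt.mp hconf).1]

theorem adversarialMean_lt_add_two_mul_of_notMem (hi : i ∉ M) (hconf : |μh i - μ i| < u i) :
    adversarialMean M μh u i < μ i + 2 * u i := by
  rw [adversarialMean_of_notMem hi]
  linarith [(abs_lt.mp hconf).2]

theorem sub_lt_four_mul_of_adversarialMean_le {o e : ι} (heM : e ∉ M)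
    (hconf_o : |μh o - μ o| < u o) (hconf_e : |μh e - μ e| < u e)
    (hle : adversarialMean M μh u o ≤ adversarialMean M μh u e) (hu : o ∈ M → u o ≤ u e) :
    μ o - μ e < 4 * u e := by
  have he_upper := adversarialMean_lt_add_two_mul_of_notMem heM hconf_e
  by_cases hoM : o ∈ M
  · have ho_lower := lt_adversarialMean_add_two_mul_of_mem hoM hconf_o
    linarith [hu hoM]
  · have ho_lower := lt_adversarialMean_of_notMem hoM hconf_o
    have hu_pos : 0 < u e := (abs_nonneg _).trans_lt hconf_e
    linarith

theorem stmt_18_general {OPT Mt : Finset ι} {m : R} {e : ι} (hcard : Mt.card ≤ OPT.card)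
    (hin : ∀ i ∈ OPT, m ≤ μ i) (hconf : ∀ i, |μh i - μ i| < u i)
    (heO : e ∉ OPT) (heMt : e ∈ Mt) (heM : e ∉ M)
    (htop : ∀ j ∉ Mt, adversarialMean M μh u j ≤ adversarialMean M μh u e)
    (hmax : ∀ a ∈ M \ Mt, u a ≤ u e) :
    m - μ e < 4 * u e := by
  obtain ⟨o, hoO, hoMt⟩ := exists_mem_notMem_of_card_le hcard heMt heO
  calc
    m - μ e ≤ μ o - μ e := sub_le_sub_right (hin o hoO) _
    _ < 4 * u e := sub_lt_four_mul_of_adversarialMean_le heM (hconf o) (hconf e) (htop o hoMt)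
      fun hoM => hmax o (Finset.mem_sdiff.mpr ⟨hoM, hoMt⟩)

end OrderedRing

/-- Suppose e ∉ OPT, e ∈ M̃ \ M, and u_e ≥ u_a for every a ∈ M △ M̃.
Then u_e ≥ Δ_e/4. -/
theorem stmt_18 {N K : ℕ} (hK1 : 1 ≤ K) (hKN : K < N)
    (μ : Fin N → ℝ) (OPT : Finset (Fin N)) (mK mK1 : ℝ)
    (hcard : OPT.card = K)
    (horder : mK1 < mK)
    (hin : ∀ i ∈ OPT, mK ≤ μ i)
    (hout : ∀ i ∉ OPT, μ i ≤ mK1)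
    (hattK : ∃ i ∈ OPT, μ i = mK)
    (hattK1 : ∃ i ∉ OPT, μ i = mK1)
    (Δ : Fin N → ℝ)
    (hΔ : ∀ i, Δ i = if i ∈ OPT then μ i - mK1 else mK - μ i)
    (μh u : Fin N → ℝ) (hu : ∀ i, 0 < u i) (hconf : ∀ i, |μh i - μ i| < u i)
    (M Mt : Finset (Fin N)) (hMcard : M.card = K) (hMtcard : Mt.card = K)
    (hMtop : ∀ i ∈ M, ∀ j ∉ M, μh j ≤ μh i)
    (μt : Fin N → ℝ)
    (hμt : ∀ i, μt i = if i ∈ M then μh i - u i else μh i + u i)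
    (hMttop : ∀ i ∈ Mt, ∀ j ∉ Mt, μt j ≤ μt i)
    (e : Fin N) (heO : e ∉ OPT) (he : e ∈ Mt \ M)
    (hmax : ∀ a ∈ (M \ Mt) ∪ (Mt \ M), u a ≤ u e) :
    u e ≥ Δ e / 4 := by
  obtain rfl : μt = adversarialMean M μh u := funext hμt
  obtain ⟨heMt, heM⟩ := Finset.mem_sdiff.mp he
  have hgap : mK - μ e < 4 * u e :=
    stmt_18_general (hMtcard.trans hcard.symm).le hin hconf heO heMt heM (hMttop e heMt)
      fun a ha => hmax a (Finset.mem_union_left _ ha)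
  rw [hΔ, if_neg heO]
  linarith
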